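/- Take s₁ = s₂ = 2 and p = q = 1, and for r > 0 let W_{a,r} denote the corresponding map W_a and μ_{a,r} its acim. Then there exist sequences rₙ = n and aₙ → 0⁺ with rₙaₙ < 1/2 such that the maps τₙ = W_{aₙ,rₙ} satisfy: each τₙ is piecewise linear with |τₙ′(x)| > 2 on each branch, τₙ converges to W_0 (the map with s₁=s₂=2, a=0), and the acims μₙ = μ_{aₙ,rₙ} (each supported on all of [0,1]) converge *-weakly to the Dirac measure δ_{1/2}. Consequently the corresponding invariant densities have no uniform positive lower bound: there is no constant c > 0 such that every density hₙ satisfies hₙ ≥ c Lebesgue-almost everywhere on [0,1]. -/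

import Mathlib

open MeasureTheory Filter Topology

/-- The W-like map `W_a` with parameters `s₁ s₂ p q r` and perturbation `a`. -/
noncomputable def Wmap (s₁ s₂ p q r a : ℝ) (x : ℝ) : ℝ :=
  if x < 1/2 - (1/2 + r*a)/(s₁ + p*a) then
    1 - (2*(s₁ + p*a)/(s₁ - 1 + p*a - 2*r*a)) * x
  else if x < 1/2 then
    (s₁ + p*a)*(x - 1/2) + 1/2 + r*a
  else if x < 1/2 + (1/2 + r*a)/(s₂ + q*a) then
    -(s₂ + q*a)*(x - 1/2) + 1/2 + r*a
  else
    1 + (2*(s₂ + q*a)/(s₂ - 1 + q*a - 2*r*a)) * (x - 1)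

/-!
Choose `a` so that the forward orbit of the central peak value `1 / 2 + r * a` eventually hits `0`.
The orbit then cuts `[0, 1]` into a Markov partition. The transfer operator multiplies the Lipschitz
constant on the cells by the sum of the squared inverse slopes, which is less than `1`, and does not
increase `L¹` distances; hence the invariant density is constant on each cell. The fixed-point
equation, followed along the orbit, shows that the density is at most `2 / r` at distance at least
`2 * r * a` from `1 / 2`. With `r = n → ∞` and `r * a → 0` all the mass is pushed to `1 / 2`.
-/

open Set Function
open scoped ENNReal

/-- The inverse branches of a piecewise affine map of the line: the `k`-th branch sends
`x ∈ dom k` to `slope k * x + shift k`, and distinct branches have disjoint images. -/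
structure AffineBranches (ι : Type*) where
  slope : ι → ℝ
  shift : ι → ℝ
  dom : ι → Set ℝ
  slope_ne_zero : ∀ k, slope k ≠ 0
  measurableSet_dom : ∀ k, MeasurableSet (dom k)
  pairwise_disjoint_image :
    Pairwise (Disjoint on fun k => (fun x => slope k * x + shift k) '' dom k)

namespace AffineBranches

variable {ι : Type*} (T : AffineBranches ι) {A : Set ℝ} {F G W : ℝ → ℝ}

/-- The `k`-th inverse branch, as an affine map of the whole line. -/
def branch (k : ι) (x : ℝ) : ℝ := T.slope k * x + T.shift k

theorem branch_injective (k : ι) : Injective (T.branch k) := fun _ _ hxy =>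
  mul_left_cancel₀ (T.slope_ne_zero k) (add_right_cancel hxy)

theorem hasDerivAt_branch (k : ι) (x : ℝ) : HasDerivAt (T.branch k) (T.slope k) x := by
  have h := ((hasDerivAt_id x).const_mul (T.slope k)).add_const (T.shift k)
  rwa [mul_one] at h

theorem continuous_branch (k : ι) : Continuous (T.branch k) :=
  (continuous_const.mul continuous_id).add continuous_const

theorem abs_branch_sub_branch (k : ι) (x y : ℝ) :
    |T.branch k x - T.branch k y| = |T.slope k| * |x - y| := by
  rw [← abs_mul]; congr 1; simp only [branch]; ring

theorem measurableSet_branch_image (k : ι) (hA : MeasurableSet A) :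
    MeasurableSet (T.branch k '' A) :=
  hA.image_of_continuousOn_injOn (T.continuous_branch k).continuousOn
    (T.branch_injective k).injOn

theorem quasiMeasurePreserving_branch (k : ι) :
    Measure.QuasiMeasurePreserving (T.branch k) volume volume := by
  refine (measurePreserving_add_right volume (T.shift k)).quasiMeasurePreserving.comp
    ⟨measurable_const_mul (T.slope k), ?_⟩
  rw [Real.map_volume_mul_left (T.slope_ne_zero k)]
  exact Measure.smul_absolutelyContinuous

theorem setIntegral_branch_image (k : ι) (hA : MeasurableSet A) (F : ℝ → ℝ) :
    ∫ u in T.branch k '' A, F u = ∫ x in A, |T.slope k| * F (T.branch k x) :=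
  integral_image_eq_integral_abs_deriv_smul hA
    (fun x _ => (T.hasDerivAt_branch k x).hasDerivWithinAt) (T.branch_injective k).injOn F

theorem integrable_branch (k : ι) (hF : Integrable F) :
    Integrable ((T.dom k).indicator fun x => |T.slope k| * F (T.branch k x)) :=
  (integrable_indicator_iff (T.measurableSet_dom k)).2 <|
    (integrableOn_image_iff_integrableOn_abs_deriv_smul (T.measurableSet_dom k)
      (fun x _ => (T.hasDerivAt_branch k x).hasDerivWithinAt)
      (T.branch_injective k).injOn F).1 hF.integrableOn

theorem pairwise_disjoint_branch_image_inter (A : Set ℝ) :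
    Pairwise (Disjoint on fun k => T.branch k '' (T.dom k ∩ A)) := fun _ _ hij =>
  (T.pairwise_disjoint_image hij).mono (image_mono inter_subset_left)
    (image_mono inter_subset_left)

theorem iUnion_branch_image_inter (hW : ∀ k, ∀ x ∈ T.dom k, W (T.branch k x) = x) (A : Set ℝ) :
    ⋃ k, T.branch k '' (T.dom k ∩ A) = W ⁻¹' A ∩ ⋃ k, T.branch k '' T.dom k := by
  ext u
  simp only [mem_iUnion, mem_inter_iff, mem_preimage]
  constructor
  · rintro ⟨k, x, ⟨hxk, hxA⟩, rfl⟩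
    exact ⟨by rwa [hW k x hxk], k, x, hxk, rfl⟩
  · rintro ⟨huA, k, x, hxk, rfl⟩
    exact ⟨k, x, ⟨hxk, by rwa [hW k x hxk] at huA⟩, rfl⟩

/-! ### The transfer operator -/

variable [Fintype ι]

/-- The Perron–Frobenius operator on densities. -/
noncomputable def transfer (F : ℝ → ℝ) (x : ℝ) : ℝ :=
  ∑ k, (T.dom k).indicator (fun x => |T.slope k| * F (T.branch k x)) x

theorem transfer_sub (F G : ℝ → ℝ) : T.transfer (F - G) = T.transfer F - T.transfer G := by
  ext x
  simp only [transfer, Pi.sub_apply, mul_sub, ← Finset.sum_sub_distrib]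
  exact Finset.sum_congr rfl fun k _ => congrFun (indicator_sub' _ _ _) x

theorem abs_transfer_le (F : ℝ → ℝ) (x : ℝ) : |T.transfer F x| ≤ T.transfer (|F ·|) x := by
  refine (Finset.abs_sum_le_sum_abs _ _).trans_eq (Finset.sum_congr rfl fun k _ => ?_)
  by_cases hx : x ∈ T.dom k <;> simp [hx, abs_mul]

theorem transfer_congr_ae (hFG : F =ᵐ[volume] G) : T.transfer F =ᵐ[volume] T.transfer G := by
  have hbranch : ∀ᵐ x, ∀ k, F (T.branch k x) = G (T.branch k x) :=
    ae_all_iff.2 fun k => (T.quasiMeasurePreserving_branch k).ae hFG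
  filter_upwards [hbranch] with x hx
  simp only [transfer, indicator, hx]

theorem integrable_transfer (hF : Integrable F) : Integrable (T.transfer F) :=
  integrable_finsetSum _ fun k _ => T.integrable_branch k hF

theorem setIntegral_transfer (hA : MeasurableSet A) (hF : Integrable F) :
    ∫ x in A, T.transfer F x = ∫ u in ⋃ k, T.branch k '' (T.dom k ∩ A), F u := by
  have hdom (k : ι) : MeasurableSet (T.dom k ∩ A) := (T.measurableSet_dom k).inter hA
  calc ∫ x in A, T.transfer F x
      = ∑ k, ∫ x in A, (T.dom k).indicator (fun x => |T.slope k| * F (T.branch k x)) x :=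
        integral_finsetSum _ fun k _ => (T.integrable_branch k hF).integrableOn
    _ = ∑ k, ∫ u in T.branch k '' (T.dom k ∩ A), F u :=
        Finset.sum_congr rfl fun k _ => by
          rw [integral_indicator (T.measurableSet_dom k),
            Measure.restrict_restrict (T.measurableSet_dom k),
            T.setIntegral_branch_image k (hdom k)]
    _ = ∫ u in ⋃ k, T.branch k '' (T.dom k ∩ A), F u :=
        (integral_iUnion_fintype (fun k => T.measurableSet_branch_image k (hdom k))
          (T.pairwise_disjoint_branch_image_inter A) fun _ => hF.integrableOn).symm

theorem eLpNorm_transfer_le (hF : Integrable F) :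
    eLpNorm (T.transfer F) 1 volume ≤ eLpNorm F 1 volume := by
  simp only [eLpNorm_one_eq_lintegral_enorm]
  rw [← ofReal_integral_norm_eq_lintegral_enorm (T.integrable_transfer hF),
    ← ofReal_integral_norm_eq_lintegral_enorm hF]
  refine ENNReal.ofReal_le_ofReal ?_
  calc ∫ x, |T.transfer F x|
      ≤ ∫ x, T.transfer (|F ·|) x :=
        integral_mono (T.integrable_transfer hF).abs (T.integrable_transfer hF.abs)
          (T.abs_transfer_le F)
    _ = ∫ u in ⋃ k, T.branch k '' (T.dom k ∩ univ), |F u| := by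
        rw [← T.setIntegral_transfer MeasurableSet.univ hF.abs, setIntegral_univ]
    _ ≤ ∫ u, |F u| := setIntegral_le_integral hF.abs (ae_of_all _ fun u => abs_nonneg (F u))

theorem ae_eq_transfer_rnDeriv {μ : Measure ℝ} [IsFiniteMeasure μ] (hμ : μ ≪ volume)
    (hW : ∀ k, ∀ x ∈ T.dom k, W (T.branch k x) = x) (hWμ : MeasurePreserving W μ μ)
    (hcover : ∀ᵐ u ∂μ, u ∈ ⋃ k, T.branch k '' T.dom k) :
    (fun x => (μ.rnDeriv volume x).toReal) =ᵐ[volume]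
      T.transfer fun x => (μ.rnDeriv volume x).toReal := by
  have hint : Integrable (fun x => (μ.rnDeriv volume x).toReal) volume :=
    Measure.integrable_toReal_rnDeriv
  refine hint.ae_eq_of_forall_setIntegral_eq _ _ (T.integrable_transfer hint) fun A hA _ => ?_
  rw [T.setIntegral_transfer hA hint, T.iUnion_branch_image_inter hW,
    Measure.setIntegral_toReal_rnDeriv hμ, Measure.setIntegral_toReal_rnDeriv hμ]
  calc μ.real A = μ.real (W ⁻¹' A) := (hWμ.measureReal_preimage hA.nullMeasurableSet).symm
    _ = μ.real (W ⁻¹' A ∩ ⋃ k, T.branch k '' T.dom k) :=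
      measureReal_congr <| by
        filter_upwards [hcover] with u hu
        exact propext ⟨fun huA => ⟨huA, hu⟩, And.left⟩

end AffineBranches

/-! ### Cells cut out by a set of points -/

/-- `x` and `y` lie in the same cell of the partition of the line by the points of `S`: no point
of `S` lies between them, endpoints included. In particular points of `S` lie in no cell. -/
def SameCell (S : Set ℝ) (x y : ℝ) : Prop := Disjoint (uIcc x y) S

/-- `f` is `K`-Lipschitz on each cell of the partition by `S`. -/
def LipschitzOnCells (S : Set ℝ) (K : ℝ) (f : ℝ → ℝ) : Prop :=
  ∀ x y, SameCell S x y → |f x - f y| ≤ K * |x - y|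

namespace SameCell

variable {S D : Set ℝ} {x y z : ℝ}

theorem symm (h : SameCell S x y) : SameCell S y x := by rwa [SameCell, uIcc_comm]

theorem trans (hxy : SameCell S x y) (hyz : SameCell S y z) : SameCell S x z :=
  (disjoint_union_left.2 ⟨hxy, hyz⟩).mono_left uIcc_subset_uIcc_union_uIcc

theorem notMem_left (h : SameCell S x y) : x ∉ S := disjoint_left.1 h left_mem_uIcc

theorem uIcc_subset (h : SameCell S x y) (hD : frontier D ⊆ S) (hx : x ∈ D) :
    uIcc x y ⊆ D := by
  have hcover : uIcc x y ⊆ interior D ∪ (closure D)ᶜ := fun z hz => by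
    by_contra hz'
    rw [mem_union, mem_compl_iff, not_or, not_not] at hz'
    exact disjoint_left.1 h hz (hD ⟨hz'.2, hz'.1⟩)
  have hx_interior : x ∈ interior D :=
    (hcover left_mem_uIcc).resolve_right fun hx' => hx' (subset_closure hx)
  exact (isPreconnected_uIcc.subset_left_of_subset_union isOpen_interior
    isClosed_closure.isOpen_compl (disjoint_compl_right.mono_left interior_subset_closure) hcover
    ⟨x, left_mem_uIcc, hx_interior⟩).trans interior_subset

theorem mem_iff (h : SameCell S x y) (hD : frontier D ⊆ S) : x ∈ D ↔ y ∈ D :=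
  ⟨fun hx => h.uIcc_subset hD hx right_mem_uIcc,
    fun hy => h.symm.uIcc_subset hD hy right_mem_uIcc⟩

theorem of_mem {I : Set ℝ} [I.OrdConnected] (hI : Disjoint I S) (hx : x ∈ I) (hy : y ∈ I) :
    SameCell S x y :=
  hI.mono_left (OrdConnected.uIcc_subset ‹_› hx hy)

theorem exists_of_ae {P : ℝ → Prop} (hS : IsClosed S) (hx : x ∉ S) (hP : ∀ᵐ y, P y) :
    ∃ y, P y ∧ SameCell S x y := by
  obtain ⟨δ, hδ, hball⟩ := Metric.isOpen_iff.1 hS.isOpen_compl x hx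
  obtain ⟨y, hy, hPy⟩ := (Measure.dense_of_ae hP).exists_mem_open Metric.isOpen_ball
    ⟨x, Metric.mem_ball_self hδ⟩
  have : (Metric.ball x δ).OrdConnected := (convex_ball x δ).ordConnected
  exact ⟨y, hy, of_mem (disjoint_left.2 hball) (Metric.mem_ball_self hδ) hPy⟩

end SameCell

/-! ### Markov partitions -/

namespace AffineBranches

variable {ι : Type*} {T : AffineBranches ι} {S : Set ℝ} {f : ℝ → ℝ} {K : ℝ}

/-- `S` is the set of endpoints of a Markov partition: it contains the endpoints of the domains
of the branches and is forward invariant, the latter expressed through the inverse branches. -/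
structure IsMarkov (T : AffineBranches ι) (S : Set ℝ) : Prop where
  frontier_dom_subset : ∀ k, frontier (T.dom k) ⊆ S
  mem_of_branch_mem : ∀ k, ∀ x ∈ T.dom k, T.branch k x ∈ S → x ∈ S

theorem IsMarkov.sameCell_branch (hS : T.IsMarkov S) {k : ι} {x y : ℝ} (h : SameCell S x y)
    (hx : x ∈ T.dom k) : SameCell S (T.branch k x) (T.branch k y) := by
  refine disjoint_left.2 fun u hu huS => ?_
  obtain ⟨z, hz, rfl⟩ := intermediate_value_uIcc (T.continuous_branch k).continuousOn hu
  have hz_dom : z ∈ T.dom k := h.uIcc_subset (hS.frontier_dom_subset k) hx hz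
  exact disjoint_left.1 h hz (hS.mem_of_branch_mem k z hz_dom huS)

variable [Fintype ι]

theorem IsMarkov.lipschitzOnCells_transfer (hS : T.IsMarkov S) (hK : 0 ≤ K)
    (hf : LipschitzOnCells S K f) :
    LipschitzOnCells S ((∑ k, T.slope k ^ 2) * K) (T.transfer f) := by
  intro x y hxy
  simp only [transfer, ← Finset.sum_sub_distrib, Finset.sum_mul]
  refine (Finset.abs_sum_le_sum_abs _ _).trans (Finset.sum_le_sum fun k _ => ?_)
  by_cases hx : x ∈ T.dom k
  · have hy : y ∈ T.dom k := (hxy.mem_iff (hS.frontier_dom_subset k)).1 hx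
    rw [indicator_of_mem hx, indicator_of_mem hy, ← mul_sub, abs_mul, abs_abs]
    calc |T.slope k| * |f (T.branch k x) - f (T.branch k y)|
        ≤ |T.slope k| * (K * (|T.slope k| * |x - y|)) := by
          rw [← T.abs_branch_sub_branch k x y]
          gcongr
          exact hf _ _ (hS.sameCell_branch hxy hx)
      _ = T.slope k ^ 2 * K * |x - y| := by rw [← sq_abs (T.slope k)]; ring
  · have hy : y ∉ T.dom k := fun hy => hx ((hxy.mem_iff (hS.frontier_dom_subset k)).2 hy)
    rw [indicator_of_notMem hx, indicator_of_notMem hy, sub_zero, abs_zero]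
    positivity

theorem IsMarkov.lipschitzOnCells_iterate_transfer (hS : T.IsMarkov S) (hK : 0 ≤ K)
    (hf : LipschitzOnCells S K f) (n : ℕ) :
    LipschitzOnCells S ((∑ k, T.slope k ^ 2) ^ n * K) (T.transfer^[n] f) := by
  induction n with
  | zero => simpa using hf
  | succ n ih =>
    rw [iterate_succ_apply', pow_succ', mul_assoc]
    exact hS.lipschitzOnCells_transfer (by positivity) ih

theorem integrable_iterate_transfer (T : AffineBranches ι) (hf : Integrable f) (n : ℕ) :
    Integrable (T.transfer^[n] f) := by
  induction n with
  | zero => exact hf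
  | succ n ih => rw [iterate_succ_apply']; exact T.integrable_transfer ih

theorem eLpNorm_iterate_transfer_sub_le {g : ℝ → ℝ} (hg : Integrable g) (hf : Integrable f)
    (hfix : f =ᵐ[volume] T.transfer f) (n : ℕ) :
    eLpNorm (T.transfer^[n] g - f) 1 volume ≤ eLpNorm (g - f) 1 volume := by
  induction n with
  | zero => rfl
  | succ n ih =>
    have hn : Integrable (T.transfer^[n] g) := T.integrable_iterate_transfer hg n
    calc eLpNorm (T.transfer^[n + 1] g - f) 1 volume
        = eLpNorm (T.transfer (T.transfer^[n] g - f)) 1 volume := by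
          rw [iterate_succ_apply', T.transfer_sub]
          exact eLpNorm_congr_ae ((ae_eq_refl _).sub hfix)
      _ ≤ eLpNorm (T.transfer^[n] g - f) 1 volume := T.eLpNorm_transfer_le (hn.sub hf)
      _ ≤ eLpNorm (g - f) 1 volume := ih

theorem IsMarkov.exists_lipschitzOnCells_approx (hS : T.IsMarkov S)
    (hslope : ∑ k, T.slope k ^ 2 < 1) (hf : Integrable f) (hfix : f =ᵐ[volume] T.transfer f)
    {ε : ℝ} (hε : 0 < ε) :
    ∃ h : ℝ → ℝ, Integrable h ∧ eLpNorm (h - f) 1 volume ≤ ENNReal.ofReal ε ∧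
      LipschitzOnCells S ε h := by
  obtain ⟨g, hg_supp, hg_smooth, hgf⟩ :=
    (memLp_one_iff_integrable.2 hf).exist_eLpNorm_sub_le ENNReal.one_ne_top le_rfl hε
  have hg : Integrable g := hg_smooth.continuous.integrable_of_hasCompactSupport hg_supp
  obtain ⟨C, hC⟩ := hg_smooth.lipschitzWith_of_hasCompactSupport hg_supp (by simp)
  have hg_lip : LipschitzOnCells S C g := fun x y _ => hC.dist_le_mul x y
  have hrate : Tendsto (fun n => (∑ k, T.slope k ^ 2) ^ n * (C : ℝ)) atTop (𝓝 0) := by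
    simpa using (tendsto_pow_atTop_nhds_zero_of_lt_one
      (Finset.sum_nonneg fun k _ => sq_nonneg (T.slope k)) hslope).mul_const (C : ℝ)
  obtain ⟨n, hn⟩ := (hrate.eventually_le_const hε).exists
  refine ⟨T.transfer^[n] g, T.integrable_iterate_transfer hg n,
    (eLpNorm_iterate_transfer_sub_le hg hf hfix n).trans ?_, fun x y hxy =>
    (hS.lipschitzOnCells_iterate_transfer C.2 hg_lip n x y hxy).trans (by gcongr; exact hn)⟩
  rwa [eLpNorm_sub_comm]

theorem IsMarkov.exists_ae_eq_of_sameCell (hS : T.IsMarkov S)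
    (hslope : ∑ k, T.slope k ^ 2 < 1) (hf : Integrable f) (hfix : f =ᵐ[volume] T.transfer f) :
    ∃ E : Set ℝ, (∀ᵐ x, x ∈ E) ∧ ∀ x ∈ E, ∀ y ∈ E, SameCell S x y → f x = f y := by
  choose h hh_int hh_near hh_lip using fun n : ℕ =>
    hS.exists_lipschitzOnCells_approx hslope hf hfix (Nat.one_div_pos_of_nat (α := ℝ) (n := n))
  have hlim : Tendsto (fun n => eLpNorm (h n - f) 1 volume) atTop (𝓝 0) := by
    refine tendsto_of_tendsto_of_tendsto_of_le_of_le tendsto_const_nhds ?_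
      (fun _ => zero_le) hh_near
    simpa using ENNReal.tendsto_ofReal (tendsto_one_div_add_atTop_nhds_zero_nat (𝕜 := ℝ))
  obtain ⟨φ, hφ, hconv⟩ := (tendstoInMeasure_of_tendsto_eLpNorm one_ne_zero
    (fun n => (hh_int n).aestronglyMeasurable) hf.aestronglyMeasurable hlim).exists_seq_tendsto_ae
  refine ⟨{x | Tendsto (fun i => h (φ i) x) atTop (𝓝 (f x))}, hconv, fun x hx y hy hxy => ?_⟩
  have hsmall : Tendsto (fun i => 1 / ((φ i : ℝ) + 1) * |x - y|) atTop (𝓝 0) := by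
    simpa using (tendsto_one_div_add_atTop_nhds_zero_nat.comp hφ.tendsto_atTop).mul_const |x - y|
  have hle : |f x - f y| ≤ 0 :=
    le_of_tendsto_of_tendsto' (hx.sub hy).abs hsmall fun i => hh_lip (φ i) x y hxy
  exact sub_eq_zero.1 (abs_nonpos_iff.1 hle)

/-- `F` is constant on the cells of the partition by `S` and is a fixed point of the transfer
operator, at every point off `S` and not merely almost everywhere. -/
structure IsCellwiseFixed (T : AffineBranches ι) (S : Set ℝ) (F : ℝ → ℝ) : Prop where
  eq_of_sameCell : ∀ x y, SameCell S x y → F x = F y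
  eq_transfer : ∀ x ∉ S, F x = T.transfer F x

theorem IsCellwiseFixed.nonneg {F : ℝ → ℝ} (hF : T.IsCellwiseFixed S F) (hS : IsClosed S)
    (hF₀ : 0 ≤ᵐ[volume] F) {x : ℝ} (hx : x ∉ S) : 0 ≤ F x := by
  obtain ⟨y, hy, hxy⟩ := SameCell.exists_of_ae hS hx hF₀
  exact hy.trans_eq (hF.eq_of_sameCell x y hxy).symm

theorem IsMarkov.exists_isCellwiseFixed (hS : T.IsMarkov S) (hS_closed : IsClosed S)
    (hS_null : volume S = 0) (hslope : ∑ k, T.slope k ^ 2 < 1) (hf : Integrable f)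
    (hfix : f =ᵐ[volume] T.transfer f) :
    ∃ F, f =ᵐ[volume] F ∧ T.IsCellwiseFixed S F := by
  obtain ⟨E, hE, hE_const⟩ := hS.exists_ae_eq_of_sameCell hslope hf hfix
  choose! rep hrep_mem hrep_cell using fun x (hx : x ∉ S) =>
    SameCell.exists_of_ae hS_closed hx hE
  have hconst (x y : ℝ) (hxy : SameCell S x y) : f (rep x) = f (rep y) :=
    have hx := hxy.notMem_left
    have hy := hxy.symm.notMem_left
    hE_const _ (hrep_mem x hx) _ (hrep_mem y hy)
      (((hrep_cell x hx).symm.trans hxy).trans (hrep_cell y hy))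
  have hfF : f =ᵐ[volume] fun x => f (rep x) := by
    filter_upwards [hE, measure_eq_zero_iff_ae_notMem.1 hS_null] with x hx hxS
    exact hE_const x hx _ (hrep_mem x hxS) (hrep_cell x hxS)
  refine ⟨_, hfF, hconst, fun x hx => ?_⟩
  obtain ⟨y, hy, hxy⟩ := SameCell.exists_of_ae hS_closed hx
    ((hfF.symm.trans hfix).trans (T.transfer_congr_ae hfF))
  have hlip : LipschitzOnCells S 0 fun x => f (rep x) := fun x y hxy => by
    simp [hconst x y hxy]
  have hconst_transfer := hS.lipschitzOnCells_transfer le_rfl hlip x y hxy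
  rw [mul_zero, zero_mul, abs_nonpos_iff, sub_eq_zero] at hconst_transfer
  exact (hconst x y hxy).trans (hy.trans hconst_transfer.symm)

end AffineBranches

/-! ### The orbit of the central peak -/

/-- The orbit of the image of the central peak `1 / 2 + d` of a symmetric W-shaped map, as long as
it stays on the left increasing branch `x ↦ s * (x - 1 / 2) + 1 / 2 + d`. That branch expands
distances to its fixed point `1 / 2 - d / (s - 1)` by the factor `s`, whence the closed form. -/
noncomputable def criticalOrbit (s d : ℝ) (j : ℕ) : ℝ :=
  1 / 2 - d / (s - 1) - s ^ j * (d * s * (s - 2) / (s - 1))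

theorem criticalOrbit_zero {s : ℝ} (hs : s ≠ 1) (d : ℝ) :
    criticalOrbit s d 0 = 1 / 2 - d * (s - 1) := by
  have : s - 1 ≠ 0 := sub_ne_zero.2 hs
  simp only [criticalOrbit]
  field_simp
  ring

theorem criticalOrbit_succ {s : ℝ} (hs : s ≠ 1) (d : ℝ) (j : ℕ) :
    criticalOrbit s d (j + 1) = s * (criticalOrbit s d j - 1 / 2) + 1 / 2 + d := by
  have : s - 1 ≠ 0 := sub_ne_zero.2 hs
  simp only [criticalOrbit]
  field_simp
  ring

theorem tendsto_criticalOrbit_atBot {s d : ℝ} (hs : 2 < s) (hd : 0 < d) :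
    Tendsto (criticalOrbit s d) atTop atBot := by
  have hcoeff : 0 < d * s * (s - 2) / (s - 1) := by
    have : 0 < s - 2 := sub_pos.2 hs
    have : 0 < s - 1 := by linarith
    positivity
  exact tendsto_atBot_add_const_left _ _ <| tendsto_neg_atTop_atBot.comp <|
    (tendsto_pow_atTop_atTop_of_one_lt (by linarith)).atTop_mul_const hcoeff

theorem continuousOn_criticalOrbit (r : ℝ) (j : ℕ) :
    ContinuousOn (fun a => criticalOrbit (2 + a) (r * a) j) (Ici 0) := by
  have hne : ∀ a ∈ Ici (0 : ℝ), 2 + a - 1 ≠ 0 := fun a ha => by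
    have : (0 : ℝ) ≤ a := ha
    linarith
  unfold criticalOrbit
  fun_prop (disch := assumption)

theorem exists_criticalOrbit_eq_zero {r η : ℝ} (hr : 0 < r) (hη : 0 < η) :
    ∃ a M, 0 < a ∧ a ≤ η ∧ criticalOrbit (2 + a) (r * a) M = 0 := by
  obtain ⟨M, hM⟩ := ((tendsto_criticalOrbit_atBot (by linarith : 2 < 2 + η)
    (mul_pos hr hη)).eventually_le_atBot 0).exists
  have hstart : criticalOrbit (2 + 0) (r * 0) M = 1 / 2 := by simp [criticalOrbit]
  obtain ⟨a, ⟨ha, haη⟩, hzero⟩ := intermediate_value_Icc' hη.le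
    ((continuousOn_criticalOrbit r M).mono Icc_subset_Ici_self) ⟨hM, by rw [hstart]; norm_num⟩
  refine ⟨a, M, ha.lt_of_ne fun h => ?_, haη, hzero⟩
  subst h
  exact absurd (hstart.symm.trans hzero) (by norm_num)

/-! ### Symmetric W-shaped maps -/

theorem image_affine_Ioo_of_neg {𝕜 : Type*} [Field 𝕜] [LinearOrder 𝕜] [IsStrictOrderedRing 𝕜]
    {m : 𝕜} (hm : m < 0) (b x y : 𝕜) :
    (fun t => m * t + b) '' Ioo x y = Ioo (m * y + b) (m * x + b) := by
  have h := image_affine_Ioo (neg_pos.2 hm) b (-y) (-x)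
  rw [← image_neg_Ioo, image_image] at h
  simpa only [neg_mul_neg] using h

/-- Parameters of a symmetric W-shaped map of `[0, 1]`: the two inner branches have slopes `± s`
and the central peak has height `1 / 2 + d`. The last condition says that the image of the peak,
`1 / 2 - d * (s - 1)`, is positive. -/
structure WShape where
  s : ℝ
  d : ℝ
  two_lt_s : 2 < s
  d_pos : 0 < d
  d_mul_lt : d * (s - 1) < 1 / 2

namespace WShape

variable (P : WShape)

/-- The zero of the map in `(0, 1 / 2)`; it is also the modulus of the slope of the inverses of the
two outer branches. -/
noncomputable def valley : ℝ := (P.s - 1 - 2 * P.d) / (2 * P.s)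

/-- The height of the central peak. -/
noncomputable def peak : ℝ := 1 / 2 + P.d

/-- The symmetric W-shaped map with parameters `P`. -/
noncomputable def map (x : ℝ) : ℝ :=
  if x < P.valley then 1 - x / P.valley
  else if x < 1 / 2 then P.s * (x - 1 / 2) + P.peak
  else if x < 1 - P.valley then -P.s * (x - 1 / 2) + P.peak
  else 1 + (x - 1) / P.valley

/-- The orbit of the image of the central peak of `P`. -/
noncomputable def orbit (j : ℕ) : ℝ := criticalOrbit P.s P.d j

/-- The fixed point of the left increasing branch. -/
noncomputable def fixedPoint : ℝ := 1 / 2 - P.d / (P.s - 1)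

theorem s_pos : 0 < P.s := two_pos.trans P.two_lt_s

theorem mul_valley : P.s * P.valley = P.s / 2 - P.peak := by
  have := P.s_pos.ne'
  simp only [valley, peak]
  field_simp
  ring

theorem inv_s_mul_peak : P.s⁻¹ * P.peak = 1 / 2 - P.valley := by
  rw [inv_mul_eq_div, div_eq_iff P.s_pos.ne']
  linarith [P.mul_valley]

theorem half_lt_peak : 1 / 2 < P.peak := lt_add_of_pos_right _ P.d_pos

theorem valley_pos : 0 < P.valley := by
  have hs := P.two_lt_s
  have hd : P.d * 1 ≤ P.d * (P.s - 1) :=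
    mul_le_mul_of_nonneg_left (by linarith) P.d_pos.le
  exact div_pos (by linarith [P.d_mul_lt]) (by linarith)

theorem valley_lt_half : P.valley < 1 / 2 := by
  have := mul_pos (inv_pos.2 P.s_pos) (one_half_pos.trans P.half_lt_peak)
  linarith [P.inv_s_mul_peak]

theorem peak_lt : P.peak < 1 - P.valley := by
  refine lt_of_mul_lt_mul_left ?_ P.s_pos.le
  rw [mul_sub, P.mul_valley]
  have := P.d_mul_lt
  simp only [peak]
  linarith

theorem orbit_zero : P.orbit 0 = 1 / 2 - P.d * (P.s - 1) :=
  criticalOrbit_zero (by linarith [P.two_lt_s]) _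

theorem orbit_zero_eq : P.orbit 0 = P.peak - P.s * P.d := by
  rw [P.orbit_zero, peak]; ring

theorem orbit_succ (j : ℕ) : P.orbit (j + 1) = P.s * (P.orbit j - P.valley) := by
  rw [mul_sub, P.mul_valley, orbit, criticalOrbit_succ (by linarith [P.two_lt_s]), peak, orbit]
  ring

theorem valley_add_inv_s_mul_orbit_succ (j : ℕ) :
    P.valley + P.s⁻¹ * P.orbit (j + 1) = P.orbit j := by
  rw [P.orbit_succ, inv_mul_cancel_left₀ P.s_pos.ne']
  ring

theorem fixedPoint_sub_orbit_zero :
    P.fixedPoint - P.orbit 0 = P.d * P.s * (P.s - 2) / (P.s - 1) := by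
  simp only [fixedPoint, orbit, criticalOrbit]
  ring

theorem orbit_zero_lt_fixedPoint : P.orbit 0 < P.fixedPoint := by
  rw [← sub_pos, P.fixedPoint_sub_orbit_zero]
  have hs := P.two_lt_s
  exact div_pos (mul_pos (mul_pos P.d_pos P.s_pos) (by linarith)) (by linarith)

theorem fixedPoint_lt_half : P.fixedPoint < 1 / 2 :=
  sub_lt_self _ (div_pos P.d_pos (by linarith [P.two_lt_s]))

theorem fixedPoint_sub_valley_add (x : ℝ) :
    P.fixedPoint - (P.valley + P.s⁻¹ * x) = P.s⁻¹ * (P.fixedPoint - x) := by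
  have := P.s_pos.ne'
  have : P.s - 1 ≠ 0 := by linarith [P.two_lt_s]
  simp only [fixedPoint, valley]
  field_simp
  ring

theorem strictAnti_orbit : StrictAnti P.orbit := by
  have hs : 1 < P.s := by linarith [P.two_lt_s]
  have hcoeff : 0 < P.d * P.s * (P.s - 2) / (P.s - 1) := by
    rw [← P.fixedPoint_sub_orbit_zero]
    linarith [P.orbit_zero_lt_fixedPoint]
  exact fun i j hij =>
    sub_lt_sub_left (mul_lt_mul_of_pos_right (pow_lt_pow_right₀ hs hij) hcoeff) _

theorem orbit_lt_half (j : ℕ) : P.orbit j < 1 / 2 :=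
  (P.strictAnti_orbit.antitone (Nat.zero_le j)).trans_lt
    (P.orbit_zero_lt_fixedPoint.trans P.fixedPoint_lt_half)

/-! ### Inverse branches of a W-shaped map -/

/-- The endpoints of the four laps of the map. -/
noncomputable def turningPoint : Fin 5 → ℝ := ![0, P.valley, 1 / 2, 1 - P.valley, 1]

/-- The slopes of the four inverse branches. -/
noncomputable def branchSlope : Fin 4 → ℝ := ![-P.valley, P.s⁻¹, -P.s⁻¹, P.valley]

/-- The constant terms of the four inverse branches. -/
noncomputable def branchShift : Fin 4 → ℝ := ![P.valley, P.valley, 1 - P.valley, 1 - P.valley]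

/-- The right endpoints of the domains of the inverse branches, the left ones being `0`. -/
noncomputable def branchHeight : Fin 4 → ℝ := ![1, P.peak, P.peak, 1]

theorem strictMono_turningPoint : StrictMono P.turningPoint := by
  have hlt := P.valley_lt_half
  refine Fin.strictMono_iff_lt_succ.2 fun k => ?_
  fin_cases k
  exacts [P.valley_pos, hlt, (by linarith : 1 / 2 < 1 - P.valley), sub_lt_self 1 P.valley_pos]

theorem image_affine_branch (k : Fin 4) :
    (fun x => P.branchSlope k * x + P.branchShift k) '' Ioo 0 (P.branchHeight k) =
      Ioo (P.turningPoint k.castSucc) (P.turningPoint k.succ) := by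
  have hg := P.valley_pos
  have hl := inv_pos.2 P.s_pos
  have hpeak := P.inv_s_mul_peak
  fin_cases k
  · refine (image_affine_Ioo_of_neg (neg_lt_zero.2 hg) _ _ _).trans ?_
    simp [turningPoint, branchShift, branchHeight]
  · refine (image_affine_Ioo hl _ _ _).trans ?_
    simp [turningPoint, branchShift, branchHeight, hpeak]
  · refine (image_affine_Ioo_of_neg (neg_lt_zero.2 hl) _ _ _).trans ?_
    simp [turningPoint, branchShift, branchHeight, hpeak, show (1 : ℝ) - 2⁻¹ = 2⁻¹ by norm_num]
  · refine (image_affine_Ioo hg _ _ _).trans ?_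
    simp [turningPoint, branchShift, branchHeight]

/-- The inverse branches of the map. -/
noncomputable def branches : AffineBranches (Fin 4) where
  slope := P.branchSlope
  shift := P.branchShift
  dom k := Ioo 0 (P.branchHeight k)
  slope_ne_zero k := by
    have := P.valley_pos.ne'
    have := P.s_pos.ne'
    fin_cases k <;> simpa [branchSlope]
  measurableSet_dom _ := measurableSet_Ioo
  pairwise_disjoint_image := by
    simp only [image_affine_branch]
    refine (pairwise_disjoint_on _).2 fun i j hij => ?_
    rw [Ioo_disjoint_Ioo]
    exact (min_le_left _ _).trans
      ((P.strictMono_turningPoint.monotone (Fin.castSucc_lt_iff_succ_le.1 hij)).trans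
        (le_max_right _ _))

variable {M : ℕ} {x : ℝ}

theorem branch_mem_Ioo {k : Fin 4} (hx : x ∈ P.branches.dom k) :
    P.branches.branch k x ∈ Ioo (P.turningPoint k.castSucc) (P.turningPoint k.succ) :=
  P.image_affine_branch k ▸ mem_image_of_mem _ hx

theorem branch_zero (x : ℝ) : P.branches.branch 0 x = P.valley - P.valley * x := by
  simp only [AffineBranches.branch, branches, branchSlope, branchShift, Matrix.cons_val]
  ring

theorem branch_one (x : ℝ) : P.branches.branch 1 x = P.valley + P.s⁻¹ * x := by
  simp only [AffineBranches.branch, branches, branchSlope, branchShift, Matrix.cons_val]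
  ring

theorem branch_two (x : ℝ) : P.branches.branch 2 x = 1 - P.valley - P.s⁻¹ * x := by
  simp only [AffineBranches.branch, branches, branchSlope, branchShift, Matrix.cons_val]
  ring

theorem branch_three (x : ℝ) : P.branches.branch 3 x = 1 - P.valley + P.valley * x := by
  simp only [AffineBranches.branch, branches, branchSlope, branchShift, Matrix.cons_val]
  ring

theorem map_branch {k : Fin 4} (hx : x ∈ P.branches.dom k) :
    P.map (P.branches.branch k x) = x := by
  have hg := P.valley_pos
  have hg' := P.valley_lt_half
  have hs := P.s_pos.ne'
  have hpeak := P.mul_valley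
  have hmem := P.branch_mem_Ioo hx
  fin_cases k
  · obtain ⟨-, hup⟩ : P.branches.branch 0 x ∈ Ioo 0 P.valley := hmem
    change P.map (P.branches.branch 0 x) = x
    rw [map, if_pos hup, branch_zero]
    field_simp
    ring
  · obtain ⟨hlow, hup⟩ : P.branches.branch 1 x ∈ Ioo P.valley (1 / 2) := hmem
    change P.map (P.branches.branch 1 x) = x
    rw [map, if_neg hlow.not_gt, if_pos hup, branch_one]
    field_simp
    linarith
  · obtain ⟨hlow, hup⟩ : P.branches.branch 2 x ∈ Ioo (1 / 2) (1 - P.valley) := hmem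
    change P.map (P.branches.branch 2 x) = x
    rw [map, if_neg (by linarith), if_neg hlow.not_gt, if_pos hup, branch_two]
    field_simp
    linarith
  · obtain ⟨hlow, -⟩ : P.branches.branch 3 x ∈ Ioo (1 - P.valley) 1 := hmem
    change P.map (P.branches.branch 3 x) = x
    rw [map, if_neg (by linarith), if_neg (by linarith), if_neg hlow.not_gt, branch_three]
    field_simp
    ring

theorem mem_iUnion_branch_image {u : ℝ} (hu : u ∈ Icc 0 1) (hu' : u ∉ range P.turningPoint) :
    u ∈ ⋃ k, P.branches.branch k '' P.branches.dom k := by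
  have himage (k : Fin 4) : P.branches.branch k '' P.branches.dom k = _ := P.image_affine_branch k
  have hne (k : Fin 5) : u ≠ P.turningPoint k := fun h => hu' ⟨k, h.symm⟩
  simp only [himage, mem_iUnion]
  rcases (hne 1).lt_or_gt with h₁ | h₁
  · exact ⟨0, hu.1.lt_of_ne (hne 0).symm, h₁⟩
  rcases (hne 2).lt_or_gt with h₂ | h₂
  · exact ⟨1, h₁, h₂⟩
  rcases (hne 3).lt_or_gt with h₃ | h₃
  · exact ⟨2, h₂, h₃⟩
  · exact ⟨3, h₃, hu.2.lt_of_ne (hne 4)⟩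

theorem sum_branchSlope_sq_lt_one : ∑ k, P.branchSlope k ^ 2 < 1 := by
  have hg : P.valley ^ 2 < (1 / 2) ^ 2 :=
    pow_lt_pow_left₀ P.valley_lt_half P.valley_pos.le two_ne_zero
  have hl : P.s⁻¹ ^ 2 < 2⁻¹ ^ 2 :=
    pow_lt_pow_left₀ (inv_strictAnti₀ two_pos P.two_lt_s) (inv_pos.2 P.s_pos).le two_ne_zero
  simp only [Fin.sum_univ_four, branchSlope, Matrix.cons_val, neg_sq]
  linarith

/-! ### The Markov partition -/

/-- When the orbit of the peak reaches `0` after `M` steps, these are the endpoints of a Markov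
partition. -/
def partition (M : ℕ) : Set ℝ := {P.peak, 1} ∪ P.orbit '' Iic M

theorem finite_partition (M : ℕ) : (P.partition M).Finite :=
  (toFinite {P.peak, 1}).union ((finite_Iic M).image _)

theorem one_mem_partition (M : ℕ) : 1 ∈ P.partition M := by simp [partition]

theorem peak_mem_partition (M : ℕ) : P.peak ∈ P.partition M := by simp [partition]

theorem orbit_mem_partition {j : ℕ} (hj : j ≤ M) : P.orbit j ∈ P.partition M :=
  Or.inr (mem_image_of_mem _ hj)

theorem disjoint_Ioo_peak_one_partition : Disjoint (Ioo P.peak 1) (P.partition M) := by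
  refine disjoint_left.2 ?_
  rintro x hx ((rfl | rfl) | ⟨j, -, rfl⟩)
  · exact lt_irrefl _ hx.1
  · exact lt_irrefl _ hx.2
  · exact lt_asymm hx.1 ((P.orbit_lt_half j).trans P.half_lt_peak)

theorem disjoint_Ioo_orbit_zero_peak_partition :
    Disjoint (Ioo (P.orbit 0) P.peak) (P.partition M) := by
  refine disjoint_left.2 ?_
  rintro x hx ((rfl | rfl) | ⟨j, -, rfl⟩)
  · exact lt_irrefl _ hx.2
  · linarith [hx.2, P.peak_lt, P.valley_pos]
  · exact hx.1.not_ge (P.strictAnti_orbit.antitone (Nat.zero_le j))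

theorem disjoint_Ioo_zero_valley_partition (hM : P.orbit M = 0) :
    Disjoint (Ioo 0 P.valley) (P.partition M) := by
  have hlt := P.valley_lt_half
  have hpeak := P.half_lt_peak
  refine disjoint_left.2 ?_
  rintro x ⟨hx_pos, hx_lt⟩ ((rfl | rfl) | ⟨j, hj, rfl⟩)
  · linarith
  · linarith
  · have hnext : P.orbit (j + 1) < P.orbit M := by
      rw [hM, P.orbit_succ]
      exact mul_neg_of_pos_of_neg P.s_pos (sub_neg.2 hx_lt)
    have hjM : j = M :=
      le_antisymm hj (Nat.lt_succ_iff.1 (P.strictAnti_orbit.lt_iff_gt.1 hnext))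
    exact hx_pos.ne' (hjM ▸ hM)

theorem mem_partition_of_branch_one_mem (hM : P.orbit M = 0) (hx : x ∈ P.branches.dom 1)
    (hmem : P.branches.branch 1 x ∈ P.partition M) : x ∈ P.partition M := by
  obtain ⟨hlow, hup⟩ : P.branches.branch 1 x ∈ Ioo P.valley (1 / 2) := P.branch_mem_Ioo hx
  rcases hmem with (h | h) | ⟨j, hj, h⟩
  · linarith [P.half_lt_peak]
  · rw [mem_singleton_iff] at h
    linarith
  · have hjM : j ≠ M := by
      rintro rfl
      linarith [P.valley_pos]
    have hx_eq : x = P.orbit (j + 1) := by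
      rw [P.orbit_succ, h, P.branch_one, add_sub_cancel_left, mul_inv_cancel_left₀ P.s_pos.ne']
    exact hx_eq ▸ P.orbit_mem_partition (Nat.lt_of_le_of_ne hj hjM)

theorem mem_partition_of_branch_two_mem (hx : x ∈ P.branches.dom 2)
    (hmem : P.branches.branch 2 x ∈ P.partition M) : x ∈ P.partition M := by
  obtain ⟨hlow, hup⟩ : P.branches.branch 2 x ∈ Ioo (1 / 2) (1 - P.valley) := P.branch_mem_Ioo hx
  rcases hmem with (h | h) | ⟨j, -, h⟩
  · have hx_eq : x = P.orbit 0 := by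
      rw [branch_two, peak, sub_eq_iff_eq_add', ← sub_eq_iff_eq_add, eq_inv_mul_iff_mul_eq₀
        P.s_pos.ne'] at h
      rw [← h, P.orbit_zero_eq, mul_sub, mul_sub, P.mul_valley]
      ring
    exact hx_eq ▸ P.orbit_mem_partition (Nat.zero_le M)
  · rw [mem_singleton_iff] at h
    linarith [P.valley_pos]
  · linarith [P.orbit_lt_half j]

theorem isMarkov_partition (hM : P.orbit M = 0) : P.branches.IsMarkov (P.partition M) where
  frontier_dom_subset k := by
    have hheight : 0 < P.branchHeight k ∧ P.branchHeight k ∈ P.partition M := by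
      have hpeak : 0 < P.peak := one_half_pos.trans P.half_lt_peak
      fin_cases k
      exacts [⟨one_pos, P.one_mem_partition M⟩, ⟨hpeak, P.peak_mem_partition M⟩,
        ⟨hpeak, P.peak_mem_partition M⟩, ⟨one_pos, P.one_mem_partition M⟩]
    refine (frontier_Ioo hheight.1).trans_subset ?_
    exact insert_subset (hM ▸ P.orbit_mem_partition le_rfl) (singleton_subset_iff.2 hheight.2)
  mem_of_branch_mem k x hx hmem := by
    fin_cases k
    · exact absurd hmem <|
        disjoint_left.1 (P.disjoint_Ioo_zero_valley_partition hM) (P.branch_mem_Ioo hx)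
    · exact P.mem_partition_of_branch_one_mem hM hx hmem
    · exact P.mem_partition_of_branch_two_mem hx hmem
    · exact absurd hmem <| disjoint_left.1 P.disjoint_Ioo_peak_one_partition
        (Ioo_subset_Ioo_left P.peak_lt.le (P.branch_mem_Ioo hx))

/-! ### Invariant densities of a W-shaped map -/

variable {P} {F : ℝ → ℝ}

theorem transfer_of_mem_Ioo_peak_one (hx : x ∈ Ioo P.peak 1) :
    P.branches.transfer F x =
      P.valley * (F (P.branches.branch 0 x) + F (P.branches.branch 3 x)) := by
  have hx_outer : x ∈ Ioo 0 1 := ⟨(one_half_pos.trans P.half_lt_peak).trans hx.1, hx.2⟩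
  have hx_inner : x ∉ Ioo 0 P.peak := fun h => lt_asymm hx.1 h.2
  simp only [AffineBranches.transfer, Fin.sum_univ_four]
  simp [branches, branchHeight, branchSlope, hx_outer, hx_inner, abs_of_pos P.valley_pos, mul_add]

theorem transfer_of_mem_Ioo_zero_peak (hx : x ∈ Ioo 0 P.peak) :
    P.branches.transfer F x =
      P.valley * (F (P.branches.branch 0 x) + F (P.branches.branch 3 x)) +
        P.s⁻¹ * (F (P.branches.branch 1 x) + F (P.branches.branch 2 x)) := by
  have hx_outer : x ∈ Ioo 0 1 := ⟨hx.1, by linarith [hx.2, P.peak_lt, P.valley_pos]⟩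
  simp only [AffineBranches.transfer, Fin.sum_univ_four]
  simp only [branches, branchSlope, branchHeight, Fin.isValue, Matrix.cons_val_zero, abs_neg,
    abs_of_pos P.valley_pos, hx_outer, indicator_of_mem, Matrix.cons_val_one, abs_inv,
    abs_of_pos P.s_pos, hx, Matrix.cons_val]
  ring

theorem one_sub_valley_mem_Ioo (P : WShape) : 1 - P.valley ∈ Ioo P.peak 1 :=
  ⟨P.peak_lt, sub_lt_self _ P.valley_pos⟩

theorem half_mem_Ioo (P : WShape) : 1 / 2 ∈ Ioo (P.orbit 0) P.peak :=
  ⟨P.orbit_lt_half 0, P.half_lt_peak⟩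

theorem eq_of_mem_Ioo_peak_one (hF : P.branches.IsCellwiseFixed (P.partition M) F)
    (hx : x ∈ Ioo P.peak 1) : F x = F (1 - P.valley) :=
  hF.eq_of_sameCell _ _ (.of_mem P.disjoint_Ioo_peak_one_partition hx P.one_sub_valley_mem_Ioo)

theorem eq_of_mem_Ioo_orbit_zero_peak (hF : P.branches.IsCellwiseFixed (P.partition M) F)
    (hx : x ∈ Ioo (P.orbit 0) P.peak) : F x = F (1 / 2) :=
  hF.eq_of_sameCell _ _ (.of_mem P.disjoint_Ioo_orbit_zero_peak_partition hx P.half_mem_Ioo)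

-- The outer branches map `(0, valley)` and `(1 - valley, 1)`, each inside one cell, onto `(0, 1)`.
theorem valley_mul_add_eq (hF : P.branches.IsCellwiseFixed (P.partition M) F) (hM : P.orbit M = 0)
    (hx : x ∈ Ioo 0 1) :
    P.valley * (F (P.branches.branch 0 x) + F (P.branches.branch 3 x)) = F (1 - P.valley) := by
  have hdom : 1 - P.valley ∈ Ioo 0 1 := by
    constructor <;> linarith [P.valley_pos, P.valley_lt_half]
  have hleft : F (P.branches.branch 0 x) = F (P.branches.branch 0 (1 - P.valley)) :=
    hF.eq_of_sameCell _ _ <| .of_mem (P.disjoint_Ioo_zero_valley_partition hM)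
      (P.branch_mem_Ioo (k := 0) hx) (P.branch_mem_Ioo (k := 0) hdom)
  have hright {y : ℝ} (hy : y ∈ Ioo 0 1) : F (P.branches.branch 3 y) = F (1 - P.valley) :=
    eq_of_mem_Ioo_peak_one hF
      (Ioo_subset_Ioo_left P.peak_lt.le (P.branch_mem_Ioo (k := 3) hy))
  have hfix := hF.eq_transfer (1 - P.valley)
    (disjoint_left.1 P.disjoint_Ioo_peak_one_partition P.one_sub_valley_mem_Ioo)
  rw [transfer_of_mem_Ioo_peak_one P.one_sub_valley_mem_Ioo] at hfix
  rw [hleft, hright hx, ← hright hdom]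
  exact hfix.symm.trans (hright hdom).symm

theorem eq_add_inv_s_mul (hF : P.branches.IsCellwiseFixed (P.partition M) F) (hM : P.orbit M = 0)
    (hx : x ∈ Ioo 0 P.peak) (hxS : x ∉ P.partition M) :
    F x = F (1 - P.valley) +
      P.s⁻¹ * (F (P.branches.branch 1 x) + F (P.branches.branch 2 x)) := by
  have hx_outer : x ∈ Ioo 0 1 := ⟨hx.1, by linarith [hx.2, P.peak_lt, P.valley_pos]⟩
  rw [hF.eq_transfer x hxS, transfer_of_mem_Ioo_zero_peak hx, valley_mul_add_eq hF hM hx_outer]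

theorem sub_two_mul_apply_half (hF : P.branches.IsCellwiseFixed (P.partition M) F)
    (hM : P.orbit M = 0) :
    (P.s - 2) * F (1 / 2) = P.s * F (1 - P.valley) := by
  have hs := P.s_pos
  have hshift : P.s⁻¹ * (1 / 2) = 1 / 2 - P.valley - P.s⁻¹ * P.d := by
    rw [← P.inv_s_mul_peak, peak]; ring
  have hsmall : 0 < P.s⁻¹ * P.d ∧ P.s⁻¹ * P.d < P.d * (P.s - 1) := by
    refine ⟨mul_pos (inv_pos.2 hs) P.d_pos, ?_⟩
    rw [mul_comm]
    exact mul_lt_mul_of_pos_left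
      ((inv_lt_one_of_one_lt₀ (by linarith [P.two_lt_s])).trans (by linarith [P.two_lt_s])) P.d_pos
  have hsmall' : P.s⁻¹ * P.d < P.d := mul_lt_of_lt_one_left P.d_pos
    (inv_lt_one_of_one_lt₀ (by linarith [P.two_lt_s]))
  have hone : F (P.branches.branch 1 (1 / 2)) = F (1 / 2) := by
    refine eq_of_mem_Ioo_orbit_zero_peak hF ?_
    rw [branch_one, hshift, orbit_zero, peak]
    constructor <;> linarith [P.d_pos]
  have htwo : F (P.branches.branch 2 (1 / 2)) = F (1 / 2) := by
    refine eq_of_mem_Ioo_orbit_zero_peak hF ?_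
    rw [branch_two, hshift, orbit_zero, peak]
    constructor <;> linarith [P.d_pos]
  have hfix := eq_add_inv_s_mul hF hM ⟨one_half_pos, P.half_lt_peak⟩
    (disjoint_left.1 P.disjoint_Ioo_orbit_zero_peak_partition P.half_mem_Ioo)
  rw [hone, htwo] at hfix
  field_simp at hfix
  linarith

theorem eq_of_mem_Ioo_zero_orbit_zero (hF : P.branches.IsCellwiseFixed (P.partition M) F)
    (hM : P.orbit M = 0) (hx : x ∈ Ioo 0 (P.orbit 0)) (hxS : x ∉ P.partition M) :
    F x = (1 + P.s⁻¹) * F (1 - P.valley) + P.s⁻¹ * F (P.valley + P.s⁻¹ * x) := by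
  have hx_inner : x ∈ Ioo 0 P.peak :=
    ⟨hx.1, hx.2.trans ((P.orbit_lt_half 0).trans P.half_lt_peak)⟩
  have htwo : F (P.branches.branch 2 x) = F (1 - P.valley) := by
    refine eq_of_mem_Ioo_peak_one hF ⟨?_, ?_⟩
    · have h := mul_lt_mul_of_pos_left hx.2 (inv_pos.2 P.s_pos)
      rw [P.orbit_zero_eq, mul_sub, P.inv_s_mul_peak, inv_mul_cancel_left₀ P.s_pos.ne'] at h
      rw [branch_two, peak]
      linarith
    · exact (P.branch_mem_Ioo (k := 2) hx_inner).2.trans P.one_sub_valley_mem_Ioo.2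
  rw [eq_add_inv_s_mul hF hM hx_inner hxS, htwo, branch_one]
  ring

theorem sub_mul_fixedPoint_sub_le_of_orbit_zero_lt
    (hF : P.branches.IsCellwiseFixed (P.partition M) F) (hF₀ : ∀ x ∉ P.partition M, 0 ≤ F x)
    (hx : x ∈ Ioo (P.orbit 0) P.fixedPoint) :
    (F x - 3 * F (1 - P.valley)) * (P.fixedPoint - x) ≤
      F (1 / 2) * (P.fixedPoint - P.orbit 0) := by
  have houter : 0 ≤ F (1 - P.valley) :=
    hF₀ _ (disjoint_left.1 P.disjoint_Ioo_peak_one_partition P.one_sub_valley_mem_Ioo)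
  have hhalf : 0 ≤ F (1 / 2) :=
    hF₀ _ (disjoint_left.1 P.disjoint_Ioo_orbit_zero_peak_partition P.half_mem_Ioo)
  have hx_dist : 0 ≤ P.fixedPoint - x := sub_nonneg.2 hx.2.le
  rw [eq_of_mem_Ioo_orbit_zero_peak hF
    ⟨hx.1, hx.2.trans (P.fixedPoint_lt_half.trans P.half_lt_peak)⟩]
  gcongr
  · linarith
  · exact hx.1.le

theorem sub_mul_fixedPoint_sub_le_branch (hF : P.branches.IsCellwiseFixed (P.partition M) F)
    (hM : P.orbit M = 0) (hF₀ : ∀ x ∉ P.partition M, 0 ≤ F x) (hx : x ∈ Ioo 0 (P.orbit 0))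
    (hxS : x ∉ P.partition M) :
    (F x - 3 * F (1 - P.valley)) * (P.fixedPoint - x) ≤
      (F (P.valley + P.s⁻¹ * x) - 3 * F (1 - P.valley)) *
        (P.fixedPoint - (P.valley + P.s⁻¹ * x)) := by
  have houter : 0 ≤ F (1 - P.valley) :=
    hF₀ _ (disjoint_left.1 P.disjoint_Ioo_peak_one_partition P.one_sub_valley_mem_Ioo)
  have hx_dist : 0 ≤ P.fixedPoint - x := sub_nonneg.2 (hx.2.trans P.orbit_zero_lt_fixedPoint).le
  have hinv : P.s⁻¹ < 2⁻¹ := inv_strictAnti₀ two_pos P.two_lt_s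
  have hslack : 0 ≤ (2 - 4 * P.s⁻¹) * F (1 - P.valley) * (P.fixedPoint - x) :=
    mul_nonneg (mul_nonneg (by linarith) houter) hx_dist
  rw [P.fixedPoint_sub_valley_add, eq_of_mem_Ioo_zero_orbit_zero hF hM hx hxS]
  linarith

-- The left inverse inner branch divides the distance to the fixed point by `s`, while `F` grows by
-- at most the factor `s` along it, up to the additive constant `3 * F (1 - P.valley)`.
theorem sub_mul_fixedPoint_sub_le (hF : P.branches.IsCellwiseFixed (P.partition M) F)
    (hM : P.orbit M = 0) (hF₀ : ∀ x ∉ P.partition M, 0 ≤ F x) (n : ℕ) (hx_pos : 0 < x)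
    (hx : x ∈ Ioo (P.orbit n) P.fixedPoint) (hxS : x ∉ P.partition M) :
    (F x - 3 * F (1 - P.valley)) * (P.fixedPoint - x) ≤
      F (1 / 2) * (P.fixedPoint - P.orbit 0) := by
  induction n generalizing x with
  | zero => exact sub_mul_fixedPoint_sub_le_of_orbit_zero_lt hF hF₀ hx
  | succ n ih =>
    rcases lt_trichotomy x (P.orbit 0) with hlt | rfl | hgt
    · have hinv := inv_pos.2 P.s_pos
      have hbranch_pos : 0 < P.valley + P.s⁻¹ * x := add_pos P.valley_pos (mul_pos hinv hx_pos)
      have hbranch_mem : P.valley + P.s⁻¹ * x ∈ Ioo (P.orbit n) P.fixedPoint := by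
        constructor
        · rw [← P.valley_add_inv_s_mul_orbit_succ]
          gcongr
          exact hx.1
        · rw [← sub_pos, P.fixedPoint_sub_valley_add]
          exact mul_pos hinv (sub_pos.2 hx.2)
      have hbranch_notMem : P.valley + P.s⁻¹ * x ∉ P.partition M := fun hmem =>
        hxS <| P.mem_partition_of_branch_one_mem hM
          ⟨hx_pos, hlt.trans ((P.orbit_lt_half 0).trans P.half_lt_peak)⟩
          (by rwa [branch_one])
      exact (sub_mul_fixedPoint_sub_le_branch hF hM hF₀ ⟨hx_pos, hlt⟩ hxS).trans
        (ih hbranch_pos hbranch_mem hbranch_notMem)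
    · exact absurd (P.orbit_mem_partition (Nat.zero_le M)) hxS
    · exact sub_mul_fixedPoint_sub_le_of_orbit_zero_lt hF hF₀ ⟨hgt, hx.2⟩

theorem apply_half_mul_le_integral (hF : P.branches.IsCellwiseFixed (P.partition M) F)
    (hF₀ : ∀ x ∉ P.partition M, 0 ≤ F x) (hF_int : Integrable F) :
    F (1 / 2) * (P.d * P.s) ≤ ∫ x, F x := by
  have hlength : P.d * P.s = volume.real (Ioo (P.orbit 0) P.peak) := by
    rw [Real.volume_real_Ioo_of_le (P.half_mem_Ioo.1.trans P.half_mem_Ioo.2).le, P.orbit_zero_eq]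
    ring
  calc F (1 / 2) * (P.d * P.s) = ∫ _ in Ioo (P.orbit 0) P.peak, F (1 / 2) := by
        rw [setIntegral_const, smul_eq_mul, hlength, mul_comm]
    _ = ∫ x in Ioo (P.orbit 0) P.peak, F x :=
        setIntegral_congr_fun measurableSet_Ioo fun x hx =>
          (eq_of_mem_Ioo_orbit_zero_peak hF hx).symm
    _ ≤ ∫ x, F x := by
        refine setIntegral_le_integral hF_int ?_
        filter_upwards [measure_eq_zero_iff_ae_notMem.1 ((P.finite_partition M).measure_zero _)]
          with x hx using hF₀ x hx

theorem apply_one_sub_valley_le (hF : P.branches.IsCellwiseFixed (P.partition M) F)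
    (hM : P.orbit M = 0) (hF₀ : ∀ x ∉ P.partition M, 0 ≤ F x)
    (hmass : F (1 / 2) * (P.d * P.s) ≤ 1) :
    F (1 - P.valley) ≤ (P.s - 2) / (4 * P.d) := by
  have hs := P.two_lt_s
  have hd := P.d_pos
  have houter : 0 ≤ F (1 - P.valley) :=
    hF₀ _ (disjoint_left.1 P.disjoint_Ioo_peak_one_partition P.one_sub_valley_mem_Ioo)
  rw [le_div_iff₀ (by positivity)]
  calc F (1 - P.valley) * (4 * P.d)
      ≤ F (1 - P.valley) * (P.s ^ 2 * P.d) := by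
        gcongr
        nlinarith
    _ = (P.s - 2) * (F (1 / 2) * (P.d * P.s)) := by
        linear_combination -(P.d * P.s) * sub_two_mul_apply_half hF hM
    _ ≤ P.s - 2 := mul_le_of_le_one_right (by linarith) hmass

theorem sub_mul_d_le_of_add_two_mul_d_le (hF : P.branches.IsCellwiseFixed (P.partition M) F)
    (hM : P.orbit M = 0) (hF₀ : ∀ x ∉ P.partition M, 0 ≤ F x) (hmass : F (1 / 2) * (P.d * P.s) ≤ 1)
    (hx_pos : 0 < x) (hxS : x ∉ P.partition M) (hx_far : x + 2 * P.d ≤ 1 / 2) :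
    (F x - 3 * F (1 - P.valley)) * P.d ≤ P.s - 2 := by
  have hs := P.two_lt_s
  have hd := P.d_pos
  have hfixed : 1 / 2 - P.d ≤ P.fixedPoint :=
    sub_le_sub_left (div_le_self hd.le (by linarith)) _
  rcases le_total (F x - 3 * F (1 - P.valley)) 0 with hneg | hpos
  · exact (mul_nonpos_of_nonpos_of_nonneg hneg hd.le).trans (by linarith)
  · calc (F x - 3 * F (1 - P.valley)) * P.d
        ≤ (F x - 3 * F (1 - P.valley)) * (P.fixedPoint - x) := by gcongr; linarith
      _ ≤ F (1 / 2) * (P.fixedPoint - P.orbit 0) :=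
          sub_mul_fixedPoint_sub_le hF hM hF₀ M hx_pos ⟨hM ▸ hx_pos, by linarith⟩ hxS
      _ = F (1 / 2) * (P.d * P.s) * ((P.s - 2) / (P.s - 1)) := by
          rw [P.fixedPoint_sub_orbit_zero]; ring
      _ ≤ 1 * (P.s - 2) := by
          gcongr
          · exact div_nonneg (by linarith) (by linarith)
          · exact div_le_self (by linarith) (by linarith)
      _ = P.s - 2 := one_mul _

theorem apply_le_of_two_mul_d_le (hF : P.branches.IsCellwiseFixed (P.partition M) F)
    (hM : P.orbit M = 0) (hF₀ : ∀ x ∉ P.partition M, 0 ≤ F x) (hmass : F (1 / 2) * (P.d * P.s) ≤ 1)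
    (hx : x ∈ Ioo 0 1) (hxS : x ∉ P.partition M) (hx_far : 2 * P.d ≤ |x - 1 / 2|) :
    F x ≤ 2 * ((P.s - 2) / P.d) := by
  have hd := P.d_pos
  have hratio : 0 < (P.s - 2) / P.d := div_pos (sub_pos.2 P.two_lt_s) hd
  have houter : F (1 - P.valley) ≤ (P.s - 2) / P.d / 4 :=
    (apply_one_sub_valley_le hF hM hF₀ hmass).trans_eq (by ring)
  rcases le_abs'.1 hx_far with hleft | hright
  · have h := (le_div_iff₀ hd).2 <|
      sub_mul_d_le_of_add_two_mul_d_le hF hM hF₀ hmass hx.1 hxS (by linarith)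
    linarith
  · rw [eq_of_mem_Ioo_peak_one hF ⟨by rw [peak]; linarith, hx.2⟩]
    linarith

/-! ### Invariant measures of a W-shaped map -/

variable {μ : Measure ℝ}

theorem exists_isCellwiseFixed_density [IsFiniteMeasure μ] (hM : P.orbit M = 0)
    (hμ : μ ≪ volume) (hsupp : ∀ᵐ x ∂μ, x ∈ Icc 0 1) (hinv : MeasurePreserving P.map μ μ) :
    ∃ F, (fun x => (μ.rnDeriv volume x).toReal) =ᵐ[volume] F ∧
      P.branches.IsCellwiseFixed (P.partition M) F := by
  have hcover : ∀ᵐ u ∂μ, u ∈ ⋃ k, P.branches.branch k '' P.branches.dom k := by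
    have hturning : ∀ᵐ u ∂μ, u ∉ range P.turningPoint :=
      measure_eq_zero_iff_ae_notMem.1 (hμ ((finite_range P.turningPoint).measure_zero volume))
    filter_upwards [hsupp, hturning] with u hu hu'
    exact P.mem_iUnion_branch_image hu hu'
  exact (P.isMarkov_partition hM).exists_isCellwiseFixed (P.finite_partition M).isClosed
    ((P.finite_partition M).measure_zero volume) P.sum_branchSlope_sq_lt_one
    Measure.integrable_toReal_rnDeriv
    (P.branches.ae_eq_transfer_rnDeriv hμ (fun _ _ => P.map_branch) hinv hcover)

theorem ae_rnDeriv_le_of_two_mul_d_le [IsProbabilityMeasure μ] (hM : P.orbit M = 0)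
    (hμ : μ ≪ volume) (hsupp : ∀ᵐ x ∂μ, x ∈ Icc 0 1) (hinv : MeasurePreserving P.map μ μ) :
    ∀ᵐ x, x ∈ Icc (0 : ℝ) 1 → 2 * P.d ≤ |x - 1 / 2| →
      (μ.rnDeriv volume x).toReal ≤ 2 * ((P.s - 2) / P.d) := by
  obtain ⟨F, hfF, hF⟩ := exists_isCellwiseFixed_density hM hμ hsupp hinv
  have hS := P.finite_partition M
  have hF_int : Integrable F := Measure.integrable_toReal_rnDeriv.congr hfF
  have hF₀ (x : ℝ) (hx : x ∉ P.partition M) : 0 ≤ F x :=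
    hF.nonneg hS.isClosed (hfF.mono fun x hx => hx ▸ ENNReal.toReal_nonneg) hx
  have hmass : F (1 / 2) * (P.d * P.s) ≤ 1 := by
    refine (apply_half_mul_le_integral hF hF₀ hF_int).trans_eq ?_
    rw [← integral_congr_ae hfF, Measure.integral_toReal_rnDeriv hμ, probReal_univ]
  filter_upwards [hfF, measure_eq_zero_iff_ae_notMem.1 (hS.measure_zero volume)]
    with x hfx hxS hx hx_far
  have hx_Ioo : x ∈ Ioo 0 1 :=
    ⟨hx.1.lt_of_ne fun h => hxS (h ▸ hM ▸ P.orbit_mem_partition le_rfl),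
      hx.2.lt_of_ne fun h => hxS (h ▸ P.one_mem_partition M)⟩
  exact hfx.trans_le (apply_le_of_two_mul_d_le hF hM hF₀ hmass hx_Ioo hxS hx_far)

theorem measure_two_mul_d_le_abs_sub_le [IsProbabilityMeasure μ] (hM : P.orbit M = 0)
    (hμ : μ ≪ volume) (hsupp : ∀ᵐ x ∂μ, x ∈ Icc 0 1) (hinv : MeasurePreserving P.map μ μ) :
    μ {x | 2 * P.d ≤ |x - 1 / 2|} ≤ ENNReal.ofReal (2 * ((P.s - 2) / P.d)) := by
  set A : Set ℝ := {x | 2 * P.d ≤ |x - 1 / 2|}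
  have hbound : 0 ≤ 2 * ((P.s - 2) / P.d) :=
    mul_nonneg two_pos.le (div_nonneg (sub_nonneg.2 P.two_lt_s.le) P.d_pos.le)
  calc μ A = μ (A ∩ Icc 0 1) := by
        refine measure_congr ?_
        filter_upwards [hsupp] with x hx
        exact propext ⟨fun hxA => ⟨hxA, hx⟩, And.left⟩
    _ = ENNReal.ofReal (∫ x in A ∩ Icc 0 1, (μ.rnDeriv volume x).toReal) := by
        rw [Measure.setIntegral_toReal_rnDeriv hμ, ofReal_measureReal]
    _ ≤ ENNReal.ofReal (2 * ((P.s - 2) / P.d)) := by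
        refine ENNReal.ofReal_le_ofReal ?_
        have hle : ∀ᵐ x, x ∈ A ∩ Icc 0 1 →
            ‖(μ.rnDeriv volume x).toReal‖ ≤ 2 * ((P.s - 2) / P.d) := by
          filter_upwards [ae_rnDeriv_le_of_two_mul_d_le hM hμ hsupp hinv] with x hx hxA
          rw [Real.norm_of_nonneg ENNReal.toReal_nonneg]
          exact hx hxA.2 hxA.1
        have hlen : volume.real (A ∩ Icc 0 1) ≤ 1 :=
          (measureReal_mono inter_subset_right (by simp)).trans_eq (by simp)
        refine (le_abs_self _).trans ((norm_setIntegral_le_of_norm_le_const_ae'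
          ((measure_mono inter_subset_right).trans_lt measure_Icc_lt_top) hle).trans ?_)
        exact mul_le_of_le_one_right hbound hlen

end WShape

/-! ### The maps `Wmap` -/

theorem measurable_Wmap (s₁ s₂ p q r a : ℝ) : Measurable (Wmap s₁ s₂ p q r a) := by
  refine Measurable.ite measurableSet_Iio ?_ (Measurable.ite measurableSet_Iio ?_
    (Measurable.ite measurableSet_Iio ?_ ?_)) <;> fun_prop

theorem Wmap_eq_map (P : WShape) {s₁ s₂ p q r a : ℝ} (h₁ : s₁ + p * a = P.s)
    (h₂ : s₂ + q * a = P.s) (hr : r * a = P.d) : Wmap s₁ s₂ p q r a = P.map := by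
  have hs := P.s_pos.ne'
  have hvalley : 1 / 2 - (1 / 2 + r * a) / (s₁ + p * a) = P.valley := by
    rw [h₁, hr, WShape.valley]; field_simp; ring
  have hvalley' : 1 / 2 + (1 / 2 + r * a) / (s₂ + q * a) = 1 - P.valley := by
    rw [h₂, hr, WShape.valley]; field_simp; ring
  have houter : 2 * (s₁ + p * a) / (s₁ - 1 + p * a - 2 * r * a) = P.valley⁻¹ := by
    rw [WShape.valley, inv_div, ← h₁, ← hr]; ring
  have houter' : 2 * (s₂ + q * a) / (s₂ - 1 + q * a - 2 * r * a) = P.valley⁻¹ := by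
    rw [WShape.valley, inv_div, ← h₂, ← hr]; ring
  ext x
  rw [Wmap, hvalley, hvalley', houter, houter', h₁, h₂, hr, WShape.map, WShape.peak]
  ring_nf

theorem ite_lt_eq_max {m b x u v : ℝ} (hm : 0 ≤ m) (huv : u - v = m * (b - x)) :
    (if x < b then u else v) = max u v := by
  split_ifs with hxb
  · exact (max_eq_left (sub_nonneg.1 (huv ▸ mul_nonneg hm (sub_nonneg.2 hxb.le)))).symm
  · refine (max_eq_right (sub_nonpos.1 (huv ▸ ?_))).symm
    exact mul_nonpos_of_nonneg_of_nonpos hm (sub_nonpos.2 (not_lt.1 hxb))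

theorem Wmap_outer_branch_sub_inner_branch {σ ρ D : ℝ} (hσ : σ ≠ 0) (hD : D ≠ 0)
    (hD_eq : D = σ - 1 - 2 * ρ) (x : ℝ) :
    1 - 2 * σ / D * x - (σ * (x - 1 / 2) + 1 / 2 + ρ) =
      (2 * σ / D + σ) * (1 / 2 - (1 / 2 + ρ) / σ - x) := by
  field_simp
  rw [hD_eq]
  ring

theorem Wmap_eq_max {s₁ s₂ p q r a : ℝ} (h₁ : 0 < s₁ + p * a) (h₂ : 0 < s₂ + q * a)
    (h₁' : 0 < s₁ - 1 + p * a - 2 * r * a) (h₂' : 0 < s₂ - 1 + q * a - 2 * r * a)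
    (hr : 0 ≤ 1 / 2 + r * a) (x : ℝ) :
    Wmap s₁ s₂ p q r a x =
      if x < 1 / 2 then
        max (1 - 2 * (s₁ + p * a) / (s₁ - 1 + p * a - 2 * r * a) * x)
          ((s₁ + p * a) * (x - 1 / 2) + 1 / 2 + r * a)
      else
        max (-(s₂ + q * a) * (x - 1 / 2) + 1 / 2 + r * a)
          (1 + 2 * (s₂ + q * a) / (s₂ - 1 + q * a - 2 * r * a) * (x - 1)) := by
  have hvalley : 1 / 2 - (1 / 2 + r * a) / (s₁ + p * a) ≤ 1 / 2 :=
    sub_le_self _ (div_nonneg hr h₁.le)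
  have hleft := ite_lt_eq_max (x := x) (b := 1 / 2 - (1 / 2 + r * a) / (s₁ + p * a))
    (u := 1 - 2 * (s₁ + p * a) / (s₁ - 1 + p * a - 2 * r * a) * x)
    (v := (s₁ + p * a) * (x - 1 / 2) + 1 / 2 + r * a)
    (add_pos (div_pos (mul_pos two_pos h₁) h₁') h₁).le
    (Wmap_outer_branch_sub_inner_branch h₁.ne' h₁'.ne' (by ring) x)
  have hreflect := Wmap_outer_branch_sub_inner_branch (ρ := r * a) h₂.ne' h₂'.ne' (by ring) (1 - x)
  have hright := ite_lt_eq_max (x := x) (b := 1 / 2 + (1 / 2 + r * a) / (s₂ + q * a))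
    (u := -(s₂ + q * a) * (x - 1 / 2) + 1 / 2 + r * a)
    (v := 1 + 2 * (s₂ + q * a) / (s₂ - 1 + q * a - 2 * r * a) * (x - 1))
    (add_pos (div_pos (mul_pos two_pos h₂) h₂') h₂).le
    (by linear_combination -hreflect)
  rw [← hleft, ← hright, Wmap]
  split_ifs <;> first | rfl | linarith

theorem tendsto_Wmap {ι : Type*} {l : Filter ι} {s₁ s₂ : ℝ} (h₁ : 1 < s₁) (h₂ : 1 < s₂)
    (p q r₀ : ℝ) {r a : ι → ℝ} (ha : Tendsto a l (𝓝 0))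
    (hra : Tendsto (fun i => r i * a i) l (𝓝 0)) (x : ℝ) :
    Tendsto (fun i => Wmap s₁ s₂ p q (r i) (a i) x) l (𝓝 (Wmap s₁ s₂ p q r₀ 0 x)) := by
  have hinner (s p : ℝ) : Tendsto (fun i => s + p * a i) l (𝓝 (s + p * 0)) :=
    tendsto_const_nhds.add (ha.const_mul p)
  have hra₀ : Tendsto (fun i => r i * a i) l (𝓝 (r₀ * 0)) := by rwa [mul_zero]
  have hdenom (s p : ℝ) :
      Tendsto (fun i => s - 1 + p * a i - 2 * r i * a i) l (𝓝 (s - 1 + p * 0 - 2 * r₀ * 0)) := by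
    simp only [mul_assoc]
    exact (hinner (s - 1) p).sub (hra₀.const_mul 2)
  have hslope {s : ℝ} (hs : 1 < s) (p : ℝ) :
      Tendsto (fun i => 2 * (s + p * a i) / (s - 1 + p * a i - 2 * r i * a i)) l
        (𝓝 (2 * (s + p * 0) / (s - 1 + p * 0 - 2 * r₀ * 0))) :=
    ((hinner s p).const_mul 2).div (hdenom s p) (by linarith)
  rw [Wmap_eq_max (by linarith) (by linarith) (by linarith) (by linarith) (by linarith)]
  have hpos : ∀ᶠ i in l, (0 < s₁ + p * a i ∧ 0 < s₂ + q * a i) ∧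
      (0 < s₁ - 1 + p * a i - 2 * r i * a i ∧ 0 < s₂ - 1 + q * a i - 2 * r i * a i) ∧
      0 < 1 / 2 + r i * a i :=
    (((hinner s₁ p).eventually_const_lt (by linarith)).and
      ((hinner s₂ q).eventually_const_lt (by linarith))).and
    ((((hdenom s₁ p).eventually_const_lt (by linarith)).and
      ((hdenom s₂ q).eventually_const_lt (by linarith))).and
      ((hra₀.const_add (1 / 2)).eventually_const_lt (by linarith)))
  refine (tendsto_congr' (hpos.mono fun i ⟨h₁₂, h₁₂', hr⟩ =>
    Wmap_eq_max h₁₂.1 h₁₂.2 h₁₂'.1 h₁₂'.2 hr.le x)).2 ?_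
  split_ifs
  · exact (tendsto_const_nhds.sub ((hslope h₁ p).mul_const x)).max
      ((((hinner s₁ p).mul_const _).add_const _).add hra₀)
  · exact ((((hinner s₂ q).neg.mul_const _).add_const _).add hra₀).max
      (tendsto_const_nhds.add ((hslope h₂ q).mul_const _))

theorem two_lt_abs_outer_slope {r a : ℝ} (ha : 0 < a) (hra : 0 ≤ r * a) (hra' : r * a < 1 / 2) :
    2 < |2 * (2 + a) / (2 - 1 + a - 2 * r * a)| := by
  have hdenom : 0 < 2 - 1 + a - 2 * r * a := by linarith
  refine lt_of_lt_of_le ?_ (le_abs_self _)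
  rw [lt_div_iff₀ hdenom]
  linarith

/-! ### Concentration of measures -/

theorem tendsto_measure_compl_of_mem_nhds {ι X : Type*} [PseudoMetricSpace X] [MeasurableSpace X]
    {l : Filter ι} {μ : ι → Measure X} {x₀ : X} {ρ : ι → ℝ} {b : ι → ℝ≥0∞}
    (hρ : Tendsto ρ l (𝓝 0)) (hb : Tendsto b l (𝓝 0))
    (hμ : ∀ᶠ i in l, μ i {x | ρ i ≤ dist x x₀} ≤ b i) {U : Set X} (hU : U ∈ 𝓝 x₀) :
    Tendsto (fun i => μ i Uᶜ) l (𝓝 0) := by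
  obtain ⟨δ, hδ, hball⟩ := Metric.mem_nhds_iff.1 hU
  refine tendsto_of_tendsto_of_tendsto_of_le_of_le' tendsto_const_nhds hb
    (Eventually.of_forall fun _ => zero_le) ?_
  filter_upwards [hμ, hρ.eventually_le_const hδ] with i hi hρi
  refine (measure_mono fun x hx => ?_).trans hi
  exact hρi.trans (not_lt.1 fun hlt => hx (hball hlt))

theorem tendsto_integral_of_tendsto_measure_compl {ι X : Type*} [TopologicalSpace X]
    [MeasurableSpace X] [OpensMeasurableSpace X] {l : Filter ι} {μ : ι → Measure X} {K : Set X}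
    (hK : IsCompact K) {x₀ : X} (hprob : ∀ᶠ i in l, IsProbabilityMeasure (μ i))
    (hsupp : ∀ᶠ i in l, ∀ᵐ x ∂μ i, x ∈ K)
    (hconc : ∀ U ∈ 𝓝 x₀, Tendsto (fun i => μ i Uᶜ) l (𝓝 0)) {g : X → ℝ} (hg : Continuous g) :
    Tendsto (fun i => ∫ x, g x ∂μ i) l (𝓝 (g x₀)) := by
  obtain ⟨C, hC⟩ := hK.exists_bound_of_continuousOn (f := fun x => g x - g x₀) (by fun_prop)
  refine Metric.tendsto_nhds.2 fun ε hε => ?_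
  set U : Set X := {x | ‖g x - g x₀‖ < ε / 2}
  have hU_open : IsOpen U := isOpen_lt (by fun_prop) continuous_const
  have hU : U ∈ 𝓝 x₀ := hU_open.mem_nhds (by simpa [U] using half_pos hε)
  have hsmall : Tendsto (fun i => C * (μ i).real Uᶜ) l (𝓝 0) := by
    simpa [measureReal_def] using
      ((ENNReal.tendsto_toReal ENNReal.zero_ne_top).comp (hconc U hU)).const_mul C
  filter_upwards [hprob, hsupp, hsmall.eventually_lt_const (half_pos hε)] with i _ hKi hi
  have hbound : ∀ᵐ x ∂μ i, ‖g x - g x₀‖ ≤ ε / 2 + Uᶜ.indicator (fun _ => C) x := by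
    filter_upwards [hKi] with x hx
    by_cases hxU : x ∈ U
    · simpa [hxU] using le_of_lt hxU
    · simpa [hxU] using (hC x hx).trans (le_add_of_nonneg_left (half_pos hε).le)
  have hg_int : Integrable g (μ i) := by
    obtain ⟨B, hB⟩ := hK.exists_bound_of_continuousOn hg.continuousOn
    exact .of_bound hg.aestronglyMeasurable B (hKi.mono hB)
  have hind : Integrable (Uᶜ.indicator fun _ => C) (μ i) :=
    (integrable_const C).indicator hU_open.measurableSet.compl
  calc dist (∫ x, g x ∂μ i) (g x₀) = ‖∫ x, (g x - g x₀) ∂μ i‖ := by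
        rw [integral_sub hg_int (integrable_const _), integral_const, probReal_univ, one_smul,
          dist_eq_norm]
    _ ≤ ∫ x, (ε / 2 + Uᶜ.indicator (fun _ => C) x) ∂μ i :=
        norm_integral_le_of_norm_le ((integrable_const _).add hind) hbound
    _ = ε / 2 + C * (μ i).real Uᶜ := by
        rw [integral_add (integrable_const _) hind, integral_const, probReal_univ, one_smul,
          integral_indicator_const _ hU_open.measurableSet.compl, smul_eq_mul, mul_comm C]
    _ < ε := by linarith

theorem not_eventually_ae_le_of_tendsto_withDensity {ι X : Type*} [MeasurableSpace X]
    {ν : Measure X} {l : Filter ι} [l.NeBot] {μ : ι → Measure X} {h : ι → X → ℝ}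
    (hμ : ∀ᶠ i in l, μ i = ν.withDensity fun x => ENNReal.ofReal (h i x)) {A : Set X}
    (hA : ν A ≠ 0) (hlim : Tendsto (fun i => μ i A) l (𝓝 0)) {c : ℝ} (hc : 0 < c) :
    ¬ ∀ᶠ i in l, ∀ᵐ x ∂ν, c ≤ h i x := by
  intro hle
  have hzero : ENNReal.ofReal c * ν A ≤ 0 := by
    refine ge_of_tendsto hlim ?_
    filter_upwards [hμ, hle] with i hμi hi
    calc ENNReal.ofReal c * ν A = ν.withDensity (fun _ => ENNReal.ofReal c) A := by
          rw [withDensity_const, Measure.smul_apply, smul_eq_mul]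
      _ ≤ ν.withDensity (fun x => ENNReal.ofReal (h i x)) A :=
          withDensity_mono (hi.mono fun x hx => ENNReal.ofReal_le_ofReal hx) A
      _ = μ i A := by rw [hμi]
  exact mul_ne_zero (ENNReal.ofReal_pos.2 hc).ne' hA (nonpos_iff_eq_zero.1 hzero)

/-! ### Concentration of the acims of `Wmap` -/

/-- `μ` is an absolutely continuous invariant probability measure of `τ` on `[0, 1]`, encoded as a
measure on `ℝ` that gives full mass to `[0, 1]`. -/
structure IsAcim (τ : ℝ → ℝ) (μ : Measure ℝ) : Prop where
  isProbabilityMeasure : IsProbabilityMeasure μ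
  absolutelyContinuous : μ ≪ volume
  ae_mem_Icc : ∀ᵐ x ∂μ, x ∈ Icc 0 1
  measurePreserving : MeasurePreserving τ μ μ

theorem IsAcim.of_eq_withDensity {τ : ℝ → ℝ} {μ : Measure ℝ} {f : ℝ → ℝ≥0∞} (hτ : Measurable τ)
    (hprob : IsProbabilityMeasure μ) (hμ : μ = (volume.restrict (Icc 0 1)).withDensity f)
    (hinv : ∀ A, MeasurableSet A → μ (τ ⁻¹' A) = μ A) : IsAcim τ μ where
  isProbabilityMeasure := hprob
  absolutelyContinuous :=
    hμ ▸ (withDensity_absolutelyContinuous _ _).trans Measure.absolutelyContinuous_restrict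
  ae_mem_Icc :=
    (hμ ▸ withDensity_absolutelyContinuous _ _ : μ ≪ _) (ae_restrict_mem measurableSet_Icc)
  measurePreserving := ⟨hτ, Measure.ext fun A hA => by rw [Measure.map_apply hτ hA, hinv A hA]⟩

theorem IsAcim.measure_two_mul_le_dist_half_le {r a : ℝ} {M : ℕ} {μ : Measure ℝ}
    (hμ : IsAcim (Wmap 2 2 1 1 r a) μ) (hr : 0 < r) (ha : 0 < a)
    (hra : r * a * (1 + a) < 1 / 2) (hM : criticalOrbit (2 + a) (r * a) M = 0) :
    μ {x | 2 * (r * a) ≤ dist x (1 / 2)} ≤ ENNReal.ofReal (2 / r) := by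
  have := hμ.isProbabilityMeasure
  let P : WShape := ⟨2 + a, r * a, by linarith, mul_pos hr ha, by linarith⟩
  have hinv := hμ.measurePreserving
  rw [Wmap_eq_map P (by rw [one_mul]) (by rw [one_mul]) rfl] at hinv
  refine (WShape.measure_two_mul_d_le_abs_sub_le (P := P) hM hμ.absolutelyContinuous
    hμ.ae_mem_Icc hinv).trans_eq (congrArg ENNReal.ofReal ?_)
  simp only [P]
  field_simp
  ring

theorem tendsto_zero_of_tendsto_mul_atTop {ι : Type*} {l : Filter ι} {r a : ι → ℝ}
    (hr : Tendsto r l atTop) (hra : Tendsto (fun i => r i * a i) l (𝓝 0)) :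
    Tendsto a l (𝓝 0) := by
  have hmul := hr.inv_tendsto_atTop.mul hra
  rw [zero_mul] at hmul
  refine hmul.congr' ?_
  filter_upwards [hr.eventually_ne_atTop 0] with i hi
  exact inv_mul_cancel_left₀ hi (a i)

theorem tendsto_measure_compl_of_isAcim_Wmap {ι : Type*} {l : Filter ι} {r a : ι → ℝ}
    {μ : ι → Measure ℝ} (hr : Tendsto r l atTop) (hra : Tendsto (fun i => r i * a i) l (𝓝 0))
    (ha : ∀ᶠ i in l, 0 < a i ∧ ∃ M, criticalOrbit (2 + a i) (r i * a i) M = 0)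
    (hμ : ∀ᶠ i in l, IsAcim (Wmap 2 2 1 1 (r i) (a i)) (μ i)) {U : Set ℝ}
    (hU : U ∈ 𝓝 (1 / 2)) : Tendsto (fun i => μ i Uᶜ) l (𝓝 0) := by
  have hρ : Tendsto (fun i => 2 * (r i * a i)) l (𝓝 0) := by simpa using hra.const_mul 2
  have hb : Tendsto (fun i => ENNReal.ofReal (2 / r i)) l (𝓝 0) := by
    simpa using ENNReal.tendsto_ofReal (hr.const_div_atTop 2)
  have hsmall : Tendsto (fun i => r i * a i * (1 + a i)) l (𝓝 0) := by
    simpa using hra.mul ((tendsto_zero_of_tendsto_mul_atTop hr hra).const_add 1)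
  refine tendsto_measure_compl_of_mem_nhds hρ hb ?_ hU
  filter_upwards [hr.eventually_gt_atTop 0, ha, hμ, hsmall.eventually_lt_const one_half_pos]
    with i hri ⟨hai, M, hM⟩ hμi hsmalli
  exact hμi.measure_two_mul_le_dist_half_le hri hai hsmalli hM

theorem exists_criticalOrbit_parameters :
    ∃ a : ℕ → ℝ, (∀ n : ℕ, 1 ≤ n → 0 < a n ∧ n * a n < 1 / 2 ∧
      ∃ M, criticalOrbit (2 + a n) (n * a n) M = 0) ∧
      Tendsto (fun n : ℕ => n * a n) atTop (𝓝 0) := by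
  have hexists (n : ℕ) : ∃ α : ℝ, 1 ≤ n → 0 < α ∧ n * α ≤ 1 / 4 / n ∧
      ∃ M, criticalOrbit (2 + α) (n * α) M = 0 := by
    rcases n.eq_zero_or_pos with rfl | hn
    · exact ⟨0, fun h => absurd h (by norm_num)⟩
    · have hn' : (0 : ℝ) < n := Nat.cast_pos.2 hn
      obtain ⟨α, M, hα, hαn, hM⟩ :=
        exists_criticalOrbit_eq_zero hn' (η := 1 / 4 / n / n) (by positivity)
      exact ⟨α, fun _ => ⟨hα, (le_div_iff₀' hn').1 hαn, M, hM⟩⟩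
  choose a ha using hexists
  refine ⟨a, fun n hn => ⟨(ha n hn).1, ?_, (ha n hn).2.2⟩, ?_⟩
  · have hquarter : (1 / 4 / n : ℝ) ≤ 1 / 4 := div_le_self (by norm_num) (Nat.one_le_cast.2 hn)
    linarith [(ha n hn).2.1]
  · refine squeeze_zero' ?_ ?_ (tendsto_const_div_atTop_nhds_zero_nat (1 / 4))
    all_goals filter_upwards [eventually_ge_atTop 1] with n hn
    · exact mul_nonneg n.cast_nonneg (ha n hn).1.le
    · exact (ha n hn).2.1

theorem volume_restrict_Icc_compl_ball_half_ne_zero :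
    volume.restrict (Icc (0 : ℝ) 1) (Metric.ball (1 / 2) (1 / 4))ᶜ ≠ 0 := by
  rw [Measure.restrict_apply Metric.isOpen_ball.measurableSet.compl]
  have hsub : Icc (0 : ℝ) (1 / 4) ⊆ (Metric.ball (1 / 2) (1 / 4))ᶜ ∩ Icc 0 1 := by
    intro x hx
    rw [Real.ball_eq_Ioo]
    exact ⟨fun hball => absurd hball.1 (by linarith [hx.2]), hx.1, by linarith [hx.2]⟩
  exact (measure_pos_of_superset hsub (by simp)).ne'

/-- The example of Section 4: with `s₁ = s₂ = 2`, `p = q = 1`, `rₙ = n`, there are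
`aₙ → 0⁺` with `rₙaₙ < 1/2` such that the maps `τₙ = W_{aₙ,rₙ}` are piecewise linear with
all slopes `> 2` in modulus, converge to `W₀`, while their acims (supported on all of
`[0,1]`) converge *-weakly to the Dirac measure `δ_{1/2}`; consequently the corresponding
invariant densities have no uniform positive lower bound. -/
theorem Wmap_example_no_uniform_lower_bound :
    ∃ a : ℕ → ℝ,
      (∀ n : ℕ, 1 ≤ n → 0 < a n ∧ (n : ℝ) * a n < 1/2) ∧
      Tendsto a atTop (𝓝 0) ∧
      (∀ n : ℕ, 1 ≤ n →
        (2 < |2*(2 + a n)/(2 - 1 + a n - 2*(n:ℝ)*a n)| ∧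
         2 < |(2 + a n)| ∧
         2 < |-(2 + a n)| ∧
         2 < |2*(2 + a n)/(2 - 1 + a n - 2*(n:ℝ)*a n)|)) ∧
      (∀ x ∈ Set.Icc (0:ℝ) 1,
        Tendsto (fun n : ℕ => Wmap 2 2 1 1 (n:ℝ) (a n) x) atTop
          (𝓝 (Wmap 2 2 1 1 1 0 x))) ∧
      ∀ μ : ℕ → Measure ℝ, ∀ h : ℕ → ℝ → ℝ,
        (∀ n : ℕ, 1 ≤ n →
          IsProbabilityMeasure (μ n) ∧
          μ n = (volume.restrict (Set.Icc (0:ℝ) 1)).withDensity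
                  (fun x => ENNReal.ofReal (h n x)) ∧
          (∀ A : Set ℝ, MeasurableSet A →
            μ n (Wmap 2 2 1 1 (n:ℝ) (a n) ⁻¹' A) = μ n A) ∧
          (∀ U : Set ℝ, IsOpen U → (U ∩ Set.Icc (0:ℝ) 1).Nonempty → 0 < μ n U)) →
        ((∀ g : ℝ → ℝ, Continuous g →
            Tendsto (fun n : ℕ => ∫ x, g x ∂(μ n)) atTop (𝓝 (g (1/2)))) ∧
         ¬ ∃ c > (0:ℝ), ∀ n : ℕ, 1 ≤ n →
            ∀ᵐ x ∂(volume.restrict (Set.Icc (0:ℝ) 1)), c ≤ h n x) := by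
  obtain ⟨a, ha, hna⟩ := exists_criticalOrbit_parameters
  have ha_lim := tendsto_zero_of_tendsto_mul_atTop tendsto_natCast_atTop_atTop hna
  refine ⟨a, fun n hn => ⟨(ha n hn).1, (ha n hn).2.1⟩, ha_lim, fun n hn => ?_,
    fun x _ => tendsto_Wmap one_lt_two one_lt_two 1 1 1 ha_lim hna x, fun μ h hμ => ?_⟩
  · obtain ⟨ha_pos, hna_lt, -⟩ := ha n hn
    have houter := two_lt_abs_outer_slope ha_pos (mul_nonneg n.cast_nonneg ha_pos.le) hna_lt
    have hinner : 2 < |2 + a n| := (lt_add_of_pos_right 2 ha_pos).trans_le (le_abs_self _)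
    exact ⟨houter, hinner, (abs_neg (2 + a n)).symm ▸ hinner, houter⟩
  have hacim : ∀ᶠ n : ℕ in atTop, IsAcim (Wmap 2 2 1 1 n (a n)) (μ n) := by
    filter_upwards [eventually_ge_atTop 1] with n hn
    obtain ⟨hprob, hdensity, hinv, -⟩ := hμ n hn
    exact .of_eq_withDensity (measurable_Wmap ..) hprob hdensity hinv
  have hconc (U : Set ℝ) (hU : U ∈ 𝓝 (1 / 2)) : Tendsto (fun n => μ n Uᶜ) atTop (𝓝 0) :=
    tendsto_measure_compl_of_isAcim_Wmap tendsto_natCast_atTop_atTop hna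
      ((eventually_ge_atTop 1).mono fun n hn => ⟨(ha n hn).1, (ha n hn).2.2⟩) hacim hU
  refine ⟨fun g hg => tendsto_integral_of_tendsto_measure_compl isCompact_Icc
    (hacim.mono fun n => IsAcim.isProbabilityMeasure) (hacim.mono fun n => IsAcim.ae_mem_Icc)
    hconc hg, fun ⟨c, hc, hlower⟩ => ?_⟩
  have hfar := hconc (Metric.ball (1 / 2) (1 / 4)) (Metric.ball_mem_nhds _ (by norm_num))
  exact not_eventually_ae_le_of_tendsto_withDensity
    ((eventually_ge_atTop 1).mono fun n hn => (hμ n hn).2.1)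
    volume_restrict_Icc_compl_ball_half_ne_zero hfar hc ((eventually_ge_atTop 1).mono hlower)
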